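/- Assume π, every entry of p, and all the emission weights f_0, f_1,…,f_T are strictly positive, so that W := Σ_{r ∈ S^{T+1}} w(r) > 0 and all filtered and prediction probabilities below are well defined and positive on reachable states. Then the smoothed probabilities satisfy the backward recursion: γ^(T)_n(i) = α̂^(T)_n(i) for all i ∈ S and n ∈ S^(T); and for t = T−1, T−2, …, 0, all n ∈ S^(t) and all i ∈ S: γ^(t)_n(i) = α̂^(t)_n(i) · Σ_{j ∈ S} p_{ij} · γ^(t+1)_{n*}(j) / φ^(t+1)_{n*}(j), where n* = n + 1 if i ∈ S_AR^c and n* = n^{(−i)} + 1 if i ∈ S_AR. -/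

import Mathlib

open Finset

namespace MRS

/-- Time since the last visit to the regime with value `j` strictly before time `t`;
equals `t + 1` if that regime was never visited before time `t`. -/
def counter {M : ℕ} (r : ℕ → Fin M) (t : ℕ) (j : ℕ) : ℕ :=
  if h : ((Finset.range t).filter fun τ => (r τ : ℕ) = j).Nonempty then
    t - ((Finset.range t).filter fun τ => (r τ : ℕ) = j).max' h
  else t + 1

/-- Counter vector for the `k` AR(1) regimes (the regimes with values `0, …, k-1`). -/
def nvec {M : ℕ} (k : ℕ) (r : ℕ → Fin M) (t : ℕ) : Fin k → ℕ :=
  fun j => counter r t (j : ℕ)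

/-- Extend a finite path to a stream (values beyond the end repeat the last value;
they are never used for counters up to time `t`). -/
def pad {M t : ℕ} (r : Fin (t + 1) → Fin M) : ℕ → Fin M :=
  fun s => r ⟨min s t, Nat.lt_succ_of_le (min_le_right s t)⟩

/-- The set `S^(t)` of possible counter vectors at time `t`: every entry lies in
`{1, …, t+1}`, at most `min t k` entries differ from `t+1`, and the entries different
from `t+1` are pairwise distinct. -/
def Sset (k t : ℕ) : Finset (Fin k → ℕ) :=
  (Fintype.piFinset fun _ : Fin k => Finset.Icc 1 (t + 1)).filter fun n =>
    (Finset.univ.filter fun j => n j ≠ t + 1).card ≤ min t k ∧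
      ∀ i j : Fin k, i ≠ j → n i ≠ t + 1 → n j ≠ t + 1 → n i ≠ n j

/-- Weight of a (partial) path `r = (r_0, …, r_t)`:
`π_{r_0} f_0(r_0) ∏_{s=1}^t p_{r_{s-1} r_s} f_s(r_s, n_s(r))`. -/
noncomputable def wpath {M : ℕ} (k : ℕ) (pi0 : Fin M → ℝ) (p : Fin M → Fin M → ℝ)
    (f0 : Fin M → ℝ) (f : ℕ → Fin M → (Fin k → ℕ) → ℝ) {t : ℕ}
    (r : Fin (t + 1) → Fin M) : ℝ :=
  pi0 (r 0) * f0 (r 0) *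
    ∏ s ∈ Finset.Icc 1 t, p (pad r (s - 1)) (pad r s) * f s (pad r s) (nvec k (pad r) s)

/-- Forward quantity `α^(t)_n(j)`: total weight of partial paths ending in regime `j`
at time `t` with counter vector `n`. -/
noncomputable def alpha {M : ℕ} (k : ℕ) (pi0 : Fin M → ℝ) (p : Fin M → Fin M → ℝ)
    (f0 : Fin M → ℝ) (f : ℕ → Fin M → (Fin k → ℕ) → ℝ)
    (t : ℕ) (n : Fin k → ℕ) (j : Fin M) : ℝ :=
  ∑ r ∈ Finset.univ.filter
      (fun r : Fin (t + 1) → Fin M => r (Fin.last t) = j ∧ nvec k (pad r) t = n),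
    wpath k pi0 p f0 f r

end MRS

namespace MRS

/-- Total forward mass at time `t`. -/
noncomputable def Asum {M : ℕ} (k : ℕ) (pi0 : Fin M → ℝ) (p : Fin M → Fin M → ℝ)
    (f0 : Fin M → ℝ) (f : ℕ → Fin M → (Fin k → ℕ) → ℝ) (t : ℕ) : ℝ :=
  ∑ n ∈ Sset k t, ∑ i : Fin M, alpha k pi0 p f0 f t n i

/-- Filtered probability `α̂^(t)_n(j) = α^(t)_n(j) / (∑_{ℓ} ∑_{n'} α^(t)_{n'}(ℓ))`. -/
noncomputable def alphaHat {M : ℕ} (k : ℕ) (pi0 : Fin M → ℝ) (p : Fin M → Fin M → ℝ)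
    (f0 : Fin M → ℝ) (f : ℕ → Fin M → (Fin k → ℕ) → ℝ)
    (t : ℕ) (n : Fin k → ℕ) (j : Fin M) : ℝ :=
  alpha k pi0 p f0 f t n j / Asum k pi0 p f0 f t

/-- Prediction probability `φ^(t)_n(j)`, defined piecewise according to whether some
counter in `n` equals `1` (then the previous regime was the corresponding AR regime)
or not (then the previous regime was not an AR regime). -/
noncomputable def phi {M : ℕ} (k : ℕ) (hkM : k ≤ M) (pi0 : Fin M → ℝ)
    (p : Fin M → Fin M → ℝ) (f0 : Fin M → ℝ) (f : ℕ → Fin M → (Fin k → ℕ) → ℝ)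
    (t : ℕ) (n : Fin k → ℕ) (j : Fin M) : ℝ :=
  if h : ∃ ℓ : Fin k, n ℓ = 1 then
    p (Fin.castLE hkM h.choose) j *
      ∑ m ∈ Finset.Icc 1 t,
        alphaHat k pi0 p f0 f (t - 1)
          (fun i => n i - 1 + if i = h.choose then m else 0) (Fin.castLE hkM h.choose)
  else
    ∑ i ∈ Finset.univ.filter (fun i : Fin M => k ≤ (i : ℕ)),
      p i j * alphaHat k pi0 p f0 f (t - 1) (fun ℓ => n ℓ - 1) i

/-- Smoothed probability `γ^(t)_n(i) = P(r_t = i, n_t(r) = n)` under the path measure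
`P({r}) = w(r)/W`. -/
noncomputable def gamma {M : ℕ} (k : ℕ) (pi0 : Fin M → ℝ) (p : Fin M → Fin M → ℝ)
    (f0 : Fin M → ℝ) (f : ℕ → Fin M → (Fin k → ℕ) → ℝ) (T : ℕ)
    (t : ℕ) (n : Fin k → ℕ) (i : Fin M) : ℝ :=
  (∑ r ∈ Finset.univ.filter (fun r : Fin (T + 1) → Fin M =>
      pad r t = i ∧ nvec k (pad r) t = n), wpath k pi0 p f0 f r) /
    ∑ r : Fin (T + 1) → Fin M, wpath k pi0 p f0 f r

end MRS

/-!
This is the forward–backward argument on the Markov chain of pairs `(r_t, n_t)`: the update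
`n_{t+1} = (n_t)*` is a function of the pair `(r_t, n_t)`, so the weight of a path splits at time
`t` into the weight of its beginning and a factor `β^(t)` which depends on the beginning only
through `(r_t, n_t)`. Hence `γ^(t)_n(i) = α^(t)_n(i) β^(t)_n(i) / W`.
Since `α^(t+1)_N(j) = f_{t+1}(j, N) · φ^(t+1)_N(j) · ∑ α^(t)`, dividing `γ^(t+1)` by `φ^(t+1)`
leaves `f_{t+1} β^(t+1)`, and the recursion for `γ` becomes the one-step recursion for `β`.
-/

namespace MRS

section Counters

variable {M k : ℕ}

lemma counter_zero (r : ℕ → Fin M) (j : ℕ) : counter r 0 j = 1 := by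
  simp [counter]

lemma counter_succ_of_eq {r : ℕ → Fin M} {t j : ℕ} (h : (r t : ℕ) = j) :
    counter r (t + 1) j = 1 := by
  have hmem : t ∈ (range (t + 1)).filter fun τ => (r τ : ℕ) = j := by simp [h]
  have hmax : ((range (t + 1)).filter fun τ => (r τ : ℕ) = j).max' ⟨t, hmem⟩ = t :=
    le_antisymm
      (max'_le _ _ _ fun τ hτ => Nat.le_of_lt_succ (mem_range.1 (mem_filter.1 hτ).1))
      (le_max' _ _ hmem)
  rw [counter, dif_pos ⟨t, hmem⟩, hmax, Nat.add_sub_cancel_left]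

lemma counter_succ_of_ne {r : ℕ → Fin M} {t j : ℕ} (h : (r t : ℕ) ≠ j) :
    counter r (t + 1) j = counter r t j + 1 := by
  have hfilter : ((range (t + 1)).filter fun τ => (r τ : ℕ) = j) =
      (range t).filter fun τ => (r τ : ℕ) = j := by
    rw [range_add_one, filter_insert, if_neg h]
  simp only [counter, hfilter]
  split_ifs with hne
  · have hlt := mem_range.1 (mem_filter.1 (max'_mem _ hne)).1
    omega
  · rfl

lemma one_le_counter (r : ℕ → Fin M) (t j : ℕ) : 1 ≤ counter r t j := by
  induction t with
  | zero => rw [counter_zero]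
  | succ t ih =>
    by_cases h : (r t : ℕ) = j
    · rw [counter_succ_of_eq h]
    · rw [counter_succ_of_ne h]; omega

lemma counter_le (r : ℕ → Fin M) (t j : ℕ) : counter r t j ≤ t + 1 := by
  induction t with
  | zero => rw [counter_zero]
  | succ t ih =>
    by_cases h : (r t : ℕ) = j
    · rw [counter_succ_of_eq h]; omega
    · rw [counter_succ_of_ne h]; omega

lemma apply_sub_counter {r : ℕ → Fin M} {t j : ℕ} (h : counter r t j ≠ t + 1) :
    (r (t - counter r t j) : ℕ) = j := by
  unfold counter at h ⊢
  split_ifs at h ⊢ with hne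
  · obtain ⟨hlt, hj⟩ := mem_filter.1 (max'_mem _ hne)
    rwa [Nat.sub_sub_self (mem_range.1 hlt).le]
  · exact absurd rfl h

lemma counter_injOn (r : ℕ → Fin M) (t : ℕ) :
    Set.InjOn (counter r t) {j | counter r t j ≠ t + 1} := by
  intro i hi j hj hij
  rw [← apply_sub_counter hi, hij, apply_sub_counter hj]

lemma dependsOn_counter (t j : ℕ) :
    DependsOn (fun r : ℕ → Fin M => counter r t j) (Set.Iio t) := by
  intro r r' h
  have hfilter : ((range t).filter fun τ => (r τ : ℕ) = j) =
      (range t).filter fun τ => (r' τ : ℕ) = j :=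
    filter_congr fun τ hτ => by rw [h τ (mem_range.1 hτ)]
  simp only [counter, hfilter]

lemma dependsOn_nvec (t : ℕ) : DependsOn (fun r : ℕ → Fin M => nvec k r t) (Set.Iio t) :=
  fun _ _ h => funext fun ℓ => dependsOn_counter t ℓ h

lemma one_le_nvec (r : ℕ → Fin M) (t : ℕ) (ℓ : Fin k) : 1 ≤ nvec k r t ℓ :=
  one_le_counter r t ℓ

lemma nvec_le (r : ℕ → Fin M) (t : ℕ) (ℓ : Fin k) : nvec k r t ℓ ≤ t + 1 :=
  counter_le r t ℓ

lemma nvec_mem_Sset (r : ℕ → Fin M) (t : ℕ) : nvec k r t ∈ Sset k t := by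
  have hIcc (ℓ : Fin k) : nvec k r t ℓ ∈ Icc 1 (t + 1) :=
    mem_Icc.2 ⟨one_le_nvec r t ℓ, nvec_le r t ℓ⟩
  have hinj : Set.InjOn (nvec k r t) {ℓ | nvec k r t ℓ ≠ t + 1} :=
    (counter_injOn r t).comp Fin.val_injective.injOn fun _ h => h
  have hcard : (univ.filter fun ℓ => nvec k r t ℓ ≠ t + 1).card ≤ t := by
    refine (card_le_card_of_injOn (t := Icc 1 t) (nvec k r t) (fun ℓ hℓ => ?_) ?_).trans
      (by simp)
    · have hne : nvec k r t ℓ ≠ t + 1 := (mem_filter.1 hℓ).2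
      have hbounds := mem_Icc.1 (hIcc ℓ)
      exact mem_coe.2 (mem_Icc.2 (by omega))
    · simpa using hinj
  refine mem_filter.2 ⟨Fintype.mem_piFinset.2 hIcc, le_min hcard ?_, ?_⟩
  · simpa using card_filter_le (univ : Finset (Fin k)) fun ℓ => nvec k r t ℓ ≠ t + 1
  · exact fun i j hij hi hj h => hij (hinj hi hj h)

/-- The updated counter vector `n*`: all counters increase by one, except that the counter of
`i` restarts at `1` if `i` is an AR(1) regime. -/
def nextCounter (i : Fin M) (n : Fin k → ℕ) : Fin k → ℕ :=
  fun ℓ => (if (ℓ : ℕ) = (i : ℕ) ∧ (i : ℕ) < k then 0 else n ℓ) + 1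

lemma nextCounter_of_eq {i : Fin M} {ℓ : Fin k} (h : (ℓ : ℕ) = i) (n : Fin k → ℕ) :
    nextCounter i n ℓ = 1 := by
  simp [nextCounter, ← h]

lemma nextCounter_of_ne {i : Fin M} {ℓ : Fin k} (h : (ℓ : ℕ) ≠ i) (n : Fin k → ℕ) :
    nextCounter i n ℓ = n ℓ + 1 := by
  simp [nextCounter, h]

lemma nvec_succ (r : ℕ → Fin M) (t : ℕ) :
    nvec k r (t + 1) = nextCounter (r t) (nvec k r t) := by
  funext ℓ
  by_cases h : (ℓ : ℕ) = r t
  · rw [nextCounter_of_eq h, nvec, counter_succ_of_eq h.symm]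
  · rw [nextCounter_of_ne h, nvec, counter_succ_of_ne (Ne.symm h), nvec]

lemma nextCounter_eq_iff_of_eq_one {i : Fin M} {m N : Fin k → ℕ} (hm : ∀ ℓ, 1 ≤ m ℓ)
    {ℓ : Fin k} (hℓ : N ℓ = 1) :
    nextCounter i m = N ↔
      (ℓ : ℕ) = i ∧ m = fun ℓ' => N ℓ' - 1 + if ℓ' = ℓ then m ℓ else 0 := by
  constructor
  · rintro rfl
    have hi : (ℓ : ℕ) = i := by
      by_contra hne
      rw [nextCounter_of_ne hne] at hℓ
      have := hm ℓ
      omega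
    refine ⟨hi, funext fun ℓ' => ?_⟩
    by_cases h : ℓ' = ℓ
    · simp [h, hℓ]
    · rw [nextCounter_of_ne (fun h' => h (Fin.ext (h'.trans hi.symm)))]
      simp [h]
  · rintro ⟨hi, hmN⟩
    funext ℓ'
    by_cases h : ℓ' = ℓ
    · rw [h, hℓ, nextCounter_of_eq hi]
    · have hmℓ' := congrFun hmN ℓ'
      rw [if_neg h] at hmℓ'
      rw [nextCounter_of_ne (fun h' => h (Fin.ext (h'.trans hi.symm)))]
      have := hm ℓ'
      omega

lemma nextCounter_eq_iff_of_forall_ne_one {i : Fin M} {m N : Fin k → ℕ} (hm : ∀ ℓ, 1 ≤ m ℓ)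
    (hN : ∀ ℓ, N ℓ ≠ 1) :
    nextCounter i m = N ↔ k ≤ (i : ℕ) ∧ m = fun ℓ => N ℓ - 1 := by
  constructor
  · rintro rfl
    have hi : k ≤ (i : ℕ) := by
      by_contra! hlt
      exact hN ⟨i, hlt⟩ (nextCounter_of_eq rfl m)
    refine ⟨hi, funext fun ℓ => ?_⟩
    rw [nextCounter_of_ne (by omega), Nat.add_sub_cancel]
  · rintro ⟨hi, hmN⟩
    funext ℓ
    have hmℓ := congrFun hmN ℓ
    have := hm ℓ
    rw [nextCounter_of_ne (by omega)]
    omega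

end Counters

section Paths

variable {M k t : ℕ}

lemma pad_zero (r : Fin (t + 1) → Fin M) : pad r 0 = r 0 := by
  simp [pad]

lemma pad_last (r : Fin (t + 1) → Fin M) : pad r t = r (Fin.last t) := by
  simp [pad, Fin.last]

/-- The path `(r_0, …, r_t, x)`; this is `Fin.snoc` with its type family fixed to be constant. -/
def snocPath (r : Fin (t + 1) → Fin M) (x : Fin M) : Fin (t + 1 + 1) → Fin M :=
  Fin.snoc (α := fun _ => Fin M) r x

lemma pad_snocPath_of_le (r : Fin (t + 1) → Fin M) (x : Fin M) {s : ℕ} (hs : s ≤ t) :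
    pad (snocPath r x) s = pad r s := by
  have hcast : (⟨min s (t + 1), Nat.lt_succ_of_le (min_le_right s (t + 1))⟩ : Fin (t + 1 + 1)) =
      Fin.castSucc ⟨min s t, Nat.lt_succ_of_le (min_le_right s t)⟩ :=
    Fin.ext (by simp; omega)
  simp only [pad, snocPath, hcast, Fin.snoc_castSucc]

lemma pad_snocPath_succ (r : Fin (t + 1) → Fin M) (x : Fin M) :
    pad (snocPath r x) (t + 1) = x := by
  rw [pad_last, snocPath, Fin.snoc_last]

lemma nvec_pad_snocPath (r : Fin (t + 1) → Fin M) (x : Fin M) {s : ℕ} (hs : s ≤ t + 1) :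
    nvec k (pad (snocPath r x)) s = nvec k (pad r) s :=
  dependsOn_nvec s fun _ hs' => pad_snocPath_of_le r x (Nat.le_of_lt_succ (hs'.trans_le hs))

lemma sum_snocPath {R : Type*} [AddCommMonoid R] (F : (Fin (t + 1 + 1) → Fin M) → R) :
    ∑ r, F r = ∑ r : Fin (t + 1) → Fin M, ∑ x, F (snocPath r x) := by
  rw [← (Fin.snocEquiv fun _ : Fin (t + 1 + 1) => Fin M).sum_comp, Fintype.sum_prod_type_right]
  rfl

end Paths

section Weights

variable {M k : ℕ} {pi0 : Fin M → ℝ} {p : Fin M → Fin M → ℝ} {f0 : Fin M → ℝ}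
  {f : ℕ → Fin M → (Fin k → ℕ) → ℝ}

lemma wpath_nonneg {t : ℕ} (hpi : ∀ i, 0 ≤ pi0 i) (hp : ∀ i j, 0 ≤ p i j)
    (hf0 : ∀ i, 0 ≤ f0 i) (hf : ∀ s, 1 ≤ s → s ≤ t → ∀ j n, 0 ≤ f s j n)
    (r : Fin (t + 1) → Fin M) : 0 ≤ wpath k pi0 p f0 f r :=
  mul_nonneg (mul_nonneg (hpi _) (hf0 _)) <| prod_nonneg fun s hs =>
    mul_nonneg (hp _ _) (hf s (mem_Icc.1 hs).1 (mem_Icc.1 hs).2 _ _)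

lemma wpath_pos {t : ℕ} (hpi : ∀ i, 0 < pi0 i) (hp : ∀ i j, 0 < p i j)
    (hf0 : ∀ i, 0 < f0 i) (hf : ∀ s, 1 ≤ s → s ≤ t → ∀ j n, 0 < f s j n)
    (r : Fin (t + 1) → Fin M) : 0 < wpath k pi0 p f0 f r :=
  mul_pos (mul_pos (hpi _) (hf0 _)) <| prod_pos fun s hs =>
    mul_pos (hp _ _) (hf s (mem_Icc.1 hs).1 (mem_Icc.1 hs).2 _ _)

variable (pi0 p f0 f)

lemma wpath_snocPath {t : ℕ} (r : Fin (t + 1) → Fin M) (x : Fin M) :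
    wpath k pi0 p f0 f (snocPath r x) =
      wpath k pi0 p f0 f r *
        (p (pad r t) x * f (t + 1) x (nextCounter (pad r t) (nvec k (pad r) t))) := by
  have hprefix : ∀ s ∈ Icc 1 t,
      p (pad (snocPath r x) (s - 1)) (pad (snocPath r x) s) *
          f s (pad (snocPath r x) s) (nvec k (pad (snocPath r x)) s) =
        p (pad r (s - 1)) (pad r s) * f s (pad r s) (nvec k (pad r) s) := by
    intro s hs
    have hst := (mem_Icc.1 hs).2
    rw [pad_snocPath_of_le r x (by omega), pad_snocPath_of_le r x hst,
      nvec_pad_snocPath r x (by omega)]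
  simp only [wpath]
  rw [prod_Icc_succ_top (by omega), prod_congr rfl hprefix, ← pad_zero (snocPath r x), ← pad_zero r,
    pad_snocPath_of_le r x t.zero_le, Nat.add_sub_cancel, pad_snocPath_of_le r x le_rfl,
    pad_snocPath_succ, nvec_pad_snocPath r x le_rfl, nvec_succ,
    ← mul_assoc (pi0 _ * f0 _)]

lemma alpha_eq_sum_ite (t : ℕ) (n : Fin k → ℕ) (i : Fin M) :
    alpha k pi0 p f0 f t n i = ∑ r : Fin (t + 1) → Fin M,
      if pad r t = i ∧ nvec k (pad r) t = n then wpath k pi0 p f0 f r else 0 := by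
  simp only [alpha, sum_filter, pad_last]

lemma Asum_eq_sum_wpath (t : ℕ) :
    Asum k pi0 p f0 f t = ∑ r : Fin (t + 1) → Fin M, wpath k pi0 p f0 f r := by
  have hregime (n : Fin k → ℕ) : ∑ i, alpha k pi0 p f0 f t n i =
      ∑ r : Fin (t + 1) → Fin M with nvec k (pad r) t = n, wpath k pi0 p f0 f r := by
    rw [← sum_fiberwise _ fun r => pad r t]
    simp only [alpha, filter_filter, pad_last, and_comm]
  simp only [Asum, hregime]
  exact sum_fiberwise_of_maps_to (fun r _ => nvec_mem_Sset (pad r) t) _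

/-- The unnormalised prediction probability: the total weight of the paths up to time `t` which
lead to the counter vector `N` at time `t + 1`, continued by a transition to `j`. -/
noncomputable def predictionMass (t : ℕ) (N : Fin k → ℕ) (j : Fin M) : ℝ :=
  ∑ r : Fin (t + 1) → Fin M, if nextCounter (pad r t) (nvec k (pad r) t) = N then
    wpath k pi0 p f0 f r * p (pad r t) j else 0

lemma alpha_succ (t : ℕ) (N : Fin k → ℕ) (j : Fin M) :
    alpha k pi0 p f0 f (t + 1) N j =
      f (t + 1) j N * predictionMass pi0 p f0 f t N j := by
  rw [alpha_eq_sum_ite, sum_snocPath, predictionMass, mul_sum]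
  refine sum_congr rfl fun r _ => ?_
  simp only [pad_snocPath_succ, nvec_pad_snocPath r _ le_rfl, nvec_succ, wpath_snocPath]
  by_cases h : nextCounter (pad r t) (nvec k (pad r) t) = N
  · simp only [h, and_true, if_true, sum_ite_eq', mem_univ]
    ring
  · simp [h]

lemma predictionMass_of_eq_one (hkM : k ≤ M) (t : ℕ) {N : Fin k → ℕ} {ℓ : Fin k}
    (hℓ : N ℓ = 1) (j : Fin M) :
    predictionMass pi0 p f0 f t N j = p (Fin.castLE hkM ℓ) j * ∑ m ∈ Icc 1 (t + 1),
      alpha k pi0 p f0 f t (fun i => N i - 1 + if i = ℓ then m else 0) (Fin.castLE hkM ℓ) := by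
  simp only [alpha_eq_sum_ite]
  rw [predictionMass, sum_comm, mul_sum]
  refine sum_congr rfl fun r _ => ?_
  rw [sum_eq_single_of_mem (nvec k (pad r) t ℓ)
    (mem_Icc.2 ⟨one_le_nvec _ _ _, nvec_le _ _ _⟩)]
  · have hregime : (ℓ : ℕ) = pad r t ↔ pad r t = Fin.castLE hkM ℓ := by
      rw [Fin.ext_iff, Fin.val_castLE, eq_comm]
    simp only [nextCounter_eq_iff_of_eq_one (one_le_nvec (pad r) t) hℓ, hregime,
      mul_ite, mul_zero]
    refine ite_congr rfl (fun h => ?_) fun _ => rfl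
    rw [h.1, mul_comm]
  · refine fun m _ hm => if_neg fun h => hm ?_
    simp [h.2, hℓ]

lemma predictionMass_of_forall_ne_one (t : ℕ) {N : Fin k → ℕ} (hN : ∀ ℓ, N ℓ ≠ 1)
    (j : Fin M) :
    predictionMass pi0 p f0 f t N j =
      ∑ i ∈ univ.filter fun i : Fin M => k ≤ (i : ℕ),
        p i j * alpha k pi0 p f0 f t (fun ℓ => N ℓ - 1) i := by
  simp only [alpha_eq_sum_ite, mul_sum]
  rw [predictionMass, sum_comm]
  refine sum_congr rfl fun r _ => ?_
  simp only [nextCounter_eq_iff_of_forall_ne_one (one_le_nvec (pad r) t) hN,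
    ite_and, mul_ite, mul_zero, sum_ite_eq, mem_filter_univ, mul_comm]

lemma phi_succ (hkM : k ≤ M) (t : ℕ) (N : Fin k → ℕ) (j : Fin M) :
    phi k hkM pi0 p f0 f (t + 1) N j =
      predictionMass pi0 p f0 f t N j / Asum k pi0 p f0 f t := by
  unfold phi
  split_ifs with h
  · rw [predictionMass_of_eq_one pi0 p f0 f hkM t h.choose_spec]
    simp only [alphaHat, Nat.add_sub_cancel, ← sum_div, mul_div_assoc]
  · rw [predictionMass_of_forall_ne_one pi0 p f0 f t (not_exists.1 h)]
    simp only [alphaHat, Nat.add_sub_cancel, sum_div, mul_div_assoc]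

variable {pi0 p f0 f} in
lemma alpha_mul_le_predictionMass {t : ℕ} (hp : ∀ i j, 0 ≤ p i j)
    (hw : ∀ r : Fin (t + 1) → Fin M, 0 ≤ wpath k pi0 p f0 f r)
    (n : Fin k → ℕ) (i j : Fin M) :
    alpha k pi0 p f0 f t n i * p i j ≤ predictionMass pi0 p f0 f t (nextCounter i n) j := by
  rw [alpha_eq_sum_ite, sum_mul, predictionMass]
  refine sum_le_sum fun r _ => ?_
  by_cases h : pad r t = i ∧ nvec k (pad r) t = n
  · simp [h.1, h.2]
  · rw [if_neg h, zero_mul]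
    exact ite_nonneg (mul_nonneg (hw r) (hp _ _)) le_rfl

/-- The backward quantity `β^(t)_n(i)`: the total weight of all continuations by `d` further
regimes of a path with regime `i` and counter vector `n` at time `t`. -/
noncomputable def beta : ℕ → ℕ → (Fin k → ℕ) → Fin M → ℝ
  | 0, _, _, _ => 1
  | d + 1, t, n, i =>
    ∑ j, p i j * f (t + 1) j (nextCounter i n) * beta d (t + 1) (nextCounter i n) j

lemma sum_wpath_mul_of_dependsOn {t T : ℕ} (ht : t ≤ T) (G : (ℕ → Fin M) → ℝ)
    (hG : DependsOn G (Set.Iic t)) :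
    ∑ r : Fin (T + 1) → Fin M, wpath k pi0 p f0 f r * G (pad r) =
      ∑ r : Fin (t + 1) → Fin M, wpath k pi0 p f0 f r *
        beta p f (T - t) t (nvec k (pad r) t) (pad r t) * G (pad r) := by
  induction ht using Nat.decreasingInduction generalizing G with
  | self => simp [beta]
  | of_succ t ht ih =>
    rw [ih G (hG.mono (Set.Iic_subset_Iic.2 t.le_succ)), sum_snocPath]
    refine sum_congr rfl fun r _ => ?_
    have hprefix (x : Fin M) : G (pad (snocPath r x)) = G (pad r) :=
      hG fun s hs => pad_snocPath_of_le r x hs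
    obtain ⟨d, rfl⟩ := Nat.exists_eq_add_of_lt ht
    rw [show t + d + 1 - (t + 1) = d by omega, show t + d + 1 - t = d + 1 by omega, beta]
    simp only [wpath_snocPath, hprefix, pad_snocPath_succ, nvec_pad_snocPath r _ le_rfl,
      nvec_succ, mul_sum, sum_mul, mul_assoc]

lemma gamma_eq_alpha_mul_beta {t T : ℕ} (ht : t ≤ T) (n : Fin k → ℕ) (i : Fin M) :
    gamma k pi0 p f0 f T t n i =
      alpha k pi0 p f0 f t n i * beta p f (T - t) t n i / Asum k pi0 p f0 f T := by
  have hG : DependsOn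
      (fun r : ℕ → Fin M => if r t = i ∧ nvec k r t = n then (1 : ℝ) else 0) (Set.Iic t) := by
    intro r r' h
    have hnvec : nvec k r t = nvec k r' t :=
      dependsOn_nvec t fun s hs => h s (Set.Iio_subset_Iic_self hs)
    simp only [h t Set.self_mem_Iic, hnvec]
  have hsplit := sum_wpath_mul_of_dependsOn pi0 p f0 f ht _ hG
  simp only [mul_ite, mul_one, mul_zero] at hsplit
  rw [gamma, sum_filter, hsplit, Asum_eq_sum_wpath, alpha_eq_sum_ite, sum_mul]
  congr 1
  refine sum_congr rfl fun r _ => ?_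
  rw [ite_mul, zero_mul]
  refine ite_congr rfl (fun h => ?_) fun _ => rfl
  rw [h.1, h.2]

variable {pi0 p f0 f}

lemma Asum_ne_zero_of_le {t T : ℕ} (ht : t ≤ T)
    (hw : ∀ r : Fin (t + 1) → Fin M, 0 ≤ wpath k pi0 p f0 f r)
    (hT : Asum k pi0 p f0 f T ≠ 0) : Asum k pi0 p f0 f t ≠ 0 := by
  contrapose! hT
  rw [Asum_eq_sum_wpath, Fintype.sum_eq_zero_iff_of_nonneg hw] at hT
  have hsplit := sum_wpath_mul_of_dependsOn pi0 p f0 f ht (fun _ => 1) fun _ _ _ => rfl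
  simpa [Asum_eq_sum_wpath, funext_iff.1 hT] using hsplit

lemma mul_gamma_div_phi {t T : ℕ} (ht : t < T) (hkM : k ≤ M) (hp : ∀ i j, 0 ≤ p i j)
    (hw : ∀ r : Fin (t + 1) → Fin M, 0 ≤ wpath k pi0 p f0 f r) {n : Fin k → ℕ} {i : Fin M}
    (hα : alpha k pi0 p f0 f t n i ≠ 0) (j : Fin M) :
    p i j * (gamma k pi0 p f0 f T (t + 1) (nextCounter i n) j /
        phi k hkM pi0 p f0 f (t + 1) (nextCounter i n) j) =
      Asum k pi0 p f0 f t / Asum k pi0 p f0 f T *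
        (p i j * f (t + 1) j (nextCounter i n) *
          beta p f (T - (t + 1)) (t + 1) (nextCounter i n) j) := by
  -- `φ` can only vanish here together with `p i j`, so the value of `γ / 0` is irrelevant.
  rcases eq_or_ne (p i j) 0 with hpij | hpij
  · simp [hpij]
  have hα_pos : 0 < alpha k pi0 p f0 f t n i :=
    (sum_nonneg fun r _ => hw r).lt_of_ne' hα
  have hmass : 0 < predictionMass pi0 p f0 f t (nextCounter i n) j :=
    (mul_pos hα_pos ((hp i j).lt_of_ne' hpij)).trans_le (alpha_mul_le_predictionMass hp hw n i j)
  rw [gamma_eq_alpha_mul_beta _ _ _ _ ht, phi_succ, alpha_succ]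
  field_simp

lemma gamma_eq_alphaHat_mul_sum {t T : ℕ} (ht : t < T) (hkM : k ≤ M)
    (hp : ∀ i j, 0 ≤ p i j) (hw : ∀ r : Fin (t + 1) → Fin M, 0 ≤ wpath k pi0 p f0 f r)
    (hA : Asum k pi0 p f0 f t ≠ 0) (n : Fin k → ℕ) (i : Fin M) :
    gamma k pi0 p f0 f T t n i = alphaHat k pi0 p f0 f t n i *
      ∑ j, p i j * (gamma k pi0 p f0 f T (t + 1) (nextCounter i n) j /
        phi k hkM pi0 p f0 f (t + 1) (nextCounter i n) j) := by
  rw [gamma_eq_alpha_mul_beta _ _ _ _ ht.le, alphaHat]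
  rcases eq_or_ne (alpha k pi0 p f0 f t n i) 0 with hα | hα
  · simp [hα]
  have hβ : beta p f (T - t) t n i = ∑ j, p i j * f (t + 1) j (nextCounter i n) *
      beta p f (T - (t + 1)) (t + 1) (nextCounter i n) j := by
    rw [show T - t = T - (t + 1) + 1 by omega, beta]
  rw [sum_congr rfl fun j _ => mul_gamma_div_phi ht hkM hp hw hα j, ← mul_sum, ← hβ]
  field_simp

end Weights

end MRS

open MRS in
theorem backward_algorithm_general {M k T : ℕ} (hkM : k ≤ M)
    (pi0 : Fin M → ℝ) (p : Fin M → Fin M → ℝ) (f0 : Fin M → ℝ)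
    (f : ℕ → Fin M → (Fin k → ℕ) → ℝ)
    (hpi : ∀ i, 0 ≤ pi0 i) (hp : ∀ i j, 0 ≤ p i j) (hf0 : ∀ i, 0 ≤ f0 i)
    (hf : ∀ t, 1 ≤ t → t ≤ T → ∀ (j : Fin M) n, 0 ≤ f t j n)
    (hW : ∑ r : Fin (T + 1) → Fin M, wpath k pi0 p f0 f r ≠ 0) :
    (∀ n i, gamma k pi0 p f0 f T T n i = alphaHat k pi0 p f0 f T n i) ∧
    ∀ t < T, ∀ n i, gamma k pi0 p f0 f T t n i = alphaHat k pi0 p f0 f t n i *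
      ∑ j, p i j * (gamma k pi0 p f0 f T (t + 1) (nextCounter i n) j /
        phi k hkM pi0 p f0 f (t + 1) (nextCounter i n) j) := by
  refine ⟨fun n i => ?_, fun t ht n i => ?_⟩
  · simp [gamma_eq_alpha_mul_beta, beta, alphaHat]
  · have hw : ∀ r : Fin (t + 1) → Fin M, 0 ≤ wpath k pi0 p f0 f r :=
      wpath_nonneg hpi hp hf0 fun s hs hst => hf s hs (hst.trans ht.le)
    rw [← Asum_eq_sum_wpath] at hW
    exact gamma_eq_alphaHat_mul_sum ht hkM hp hw (Asum_ne_zero_of_le ht.le hw hW) n i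

open MRS in
/-- The backward recursion for the smoothed probabilities:
`γ^(T)_n(i) = α̂^(T)_n(i)`, and for `t = T-1,…,0`, `n ∈ S^(t)` and `i ∈ S`,
`γ^(t)_n(i) = α̂^(t)_n(i) · ∑_j p_{ij} · γ^(t+1)_{n*}(j) / φ^(t+1)_{n*}(j)`, where
`n* = n + 1` if `i ∈ S_AR^c` and `n* = n^{(−i)} + 1` if `i ∈ S_AR`. -/
theorem backward_algorithm (M k T : ℕ) (hM : 2 ≤ M) (hk : 1 ≤ k) (hkM : k < M)
    (hT : 1 ≤ T)
    (pi0 : Fin M → ℝ) (p : Fin M → Fin M → ℝ) (f0 : Fin M → ℝ)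
    (f : ℕ → Fin M → (Fin k → ℕ) → ℝ)
    (hpi : ∀ i, 0 < pi0 i) (hpisum : ∑ i, pi0 i = 1)
    (hp : ∀ i j, 0 < p i j) (hprow : ∀ i, ∑ j, p i j = 1)
    (hf0 : ∀ i, 0 < f0 i) (hf : ∀ t, 1 ≤ t → t ≤ T → ∀ (j : Fin M) n, 0 < f t j n) :
    (∀ i : Fin M, ∀ n ∈ Sset k T,
      gamma k pi0 p f0 f T T n i = alphaHat k pi0 p f0 f T n i) ∧
    (∀ t : ℕ, t < T → ∀ n ∈ Sset k t, ∀ i : Fin M,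
      gamma k pi0 p f0 f T t n i
        = alphaHat k pi0 p f0 f t n i *
            ∑ j : Fin M,
              p i j *
                (gamma k pi0 p f0 f T (t + 1)
                    (fun ℓ : Fin k =>
                      (if (ℓ : ℕ) = (i : ℕ) ∧ (i : ℕ) < k then 0 else n ℓ) + 1) j /
                  phi k hkM.le pi0 p f0 f (t + 1)
                    (fun ℓ : Fin k =>
                      (if (ℓ : ℕ) = (i : ℕ) ∧ (i : ℕ) < k then 0 else n ℓ) + 1) j)) := by
  have : Nonempty (Fin M) := ⟨⟨0, by omega⟩⟩
  have hW : 0 < ∑ r : Fin (T + 1) → Fin M, wpath k pi0 p f0 f r :=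
    sum_pos (fun r _ => wpath_pos hpi hp hf0 hf r) univ_nonempty
  obtain ⟨hlast, hstep⟩ := backward_algorithm_general hkM.le pi0 p f0 f (fun i => (hpi i).le)
    (fun i j => (hp i j).le) (fun i => (hf0 i).le) (fun t h1 ht j n => (hf t h1 ht j n).le) hW.ne'
  exact ⟨fun i n _ => hlast n i, fun t ht n _ i => hstep t ht n i⟩
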